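/- Let n ≥ 2, fix indices i₀, j₀ ∈ {1,…,n}, and let M = (m_{ij}) be an n×n complex matrix such that all entries in row i₀ and in column j₀ are nonzero. Then there exist diagonal unitary matrices D_L and D_R such that every entry of D_L · M · D_R is real, if and only if Im(m_{i₀j₀} · m_{kl} · conj(m_{i₀l}) · conj(m_{kj₀})) = 0 for all k ≠ i₀ and all l ≠ j₀. -/

import Mathlib

lemma aux_exp (z : ℂ) (hz : z ≠ 0) :
    Complex.exp ((Complex.arg z : ℂ) * Complex.I) = z * ((‖z‖⁻¹ : ℝ) : ℂ) := by
  have h := Complex.norm_mul_exp_arg_mul_I z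
  have hn : (‖z‖ : ℂ) ≠ 0 := by simpa using hz
  push_cast
  rw [eq_mul_inv_iff_mul_eq₀ hn, mul_comm]
  exact h

lemma aux_conj (t : ℝ) : (starRingEnd ℂ) (Complex.exp ((t : ℂ) * Complex.I)) =
    Complex.exp (((-t : ℝ) : ℂ) * Complex.I) := by
  rw [← Complex.exp_conj]
  simp

lemma aux_unit (t : ℝ) : Complex.exp ((t : ℂ) * Complex.I) *
    (starRingEnd ℂ) (Complex.exp ((t : ℂ) * Complex.I)) = 1 := by
  rw [aux_conj, ← Complex.exp_add]
  simp

lemma aux_exp_neg (z : ℂ) (hz : z ≠ 0) :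
    Complex.exp (((-Complex.arg z : ℝ) : ℂ) * Complex.I) =
      (starRingEnd ℂ) z * ((‖z‖⁻¹ : ℝ) : ℂ) := by
  rw [← aux_conj, aux_exp z hz, map_mul, Complex.conj_ofReal]

/-- For fixed indices `i₀, j₀`, an `n × n` complex matrix `M` (with `n ≥ 2`)
whose row `i₀` and column `j₀` entries are all nonzero can be rephased to a matrix with all
real entries by diagonal unitary matrices `D_L` and `D_R` if and only if
`Im(m_{i₀j₀} m_{kl} m̄_{i₀l} m̄_{kj₀}) = 0` for all `k ≠ i₀` and `l ≠ j₀`. -/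
theorem jarlskog_rephasing_to_real_entries_general_pivot
    (n : ℕ) (hn : 2 ≤ n) (i₀ j₀ : Fin n) (M : Matrix (Fin n) (Fin n) ℂ)
    (hrow : ∀ j : Fin n, M i₀ j ≠ 0)
    (hcol : ∀ i : Fin n, M i j₀ ≠ 0) :
    (∃ φ ψ : Fin n → ℝ,
      ∀ i j : Fin n,
        ((Matrix.diagonal (fun i => Complex.exp ((φ i : ℂ) * Complex.I)) * M *
          Matrix.diagonal (fun j => Complex.exp ((ψ j : ℂ) * Complex.I))) i j).im = 0) ↔
    (∀ k l : Fin n, k ≠ i₀ → l ≠ j₀ →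
      (M i₀ j₀ * M k l *
        (starRingEnd ℂ) (M i₀ l) *
        (starRingEnd ℂ) (M k j₀)).im = 0) := by
  simp only [Matrix.mul_diagonal, Matrix.diagonal_mul]
  constructor
  · rintro ⟨φ, ψ, h⟩ k l _ _
    simp only [← Complex.conj_eq_iff_im] at h ⊢
    have e : M i₀ j₀ * M k l * (starRingEnd ℂ) (M i₀ l) * (starRingEnd ℂ) (M k j₀) =
        (Complex.exp (φ i₀ * Complex.I) * M i₀ j₀ * Complex.exp (ψ j₀ * Complex.I)) *
        (Complex.exp (φ k * Complex.I) * M k l * Complex.exp (ψ l * Complex.I)) *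
        (starRingEnd ℂ) (Complex.exp (φ i₀ * Complex.I) * M i₀ l * Complex.exp (ψ l * Complex.I)) *
        (starRingEnd ℂ)
          (Complex.exp (φ k * Complex.I) * M k j₀ * Complex.exp (ψ j₀ * Complex.I)) := by
      simp only [map_mul]
      linear_combination (exp := 1) (M i₀ j₀ * M k l * (starRingEnd ℂ) (M i₀ l) *
        (starRingEnd ℂ) (M k j₀)) * (-(aux_unit (φ i₀)) -
          Complex.exp (φ i₀ * Complex.I) * (starRingEnd ℂ) (Complex.exp (φ i₀ * Complex.I)) *
          (aux_unit (φ k) + 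
          Complex.exp (φ k * Complex.I) * (starRingEnd ℂ) (Complex.exp (φ k * Complex.I)) *
          (aux_unit (ψ j₀) + 
          Complex.exp (ψ j₀ * Complex.I) * (starRingEnd ℂ) (Complex.exp (ψ j₀ * Complex.I)) *
          aux_unit (ψ l))))
    rw [e]
    simp only [h, map_mul (starRingEnd ℂ) (_ * _ * _) (_ * _ * _),
      map_mul (starRingEnd ℂ) (_ * _ * _ * _) (_ * _ * _)]
  · intro h
    refine ⟨fun i => -Complex.arg (M i j₀),
      fun j => Complex.arg (M i₀ j₀) + -Complex.arg (M i₀ j), fun i j => ?_⟩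
    have key : (M i₀ j₀ * M i j * (starRingEnd ℂ) (M i₀ j) *
        (starRingEnd ℂ) (M i j₀)).im = 0 := by
      by_cases hi : i = i₀
      · subst hi
        rw [← Complex.conj_eq_iff_im]
        simp only [map_mul, Complex.conj_conj]
        ring
      · by_cases hj : j = j₀
        · subst hj
          rw [← Complex.conj_eq_iff_im]
          simp only [map_mul, Complex.conj_conj]
          ring
        · exact h i j hi hj
    rw [Complex.ofReal_add, add_mul, Complex.exp_add, aux_exp_neg _ (hcol i),
      aux_exp _ (hrow j₀), aux_exp_neg _ (hrow j)]
    have e : ∀ (a b c d : ℂ) (x y z : ℝ), d * (x : ℂ) * b * (a * (y : ℂ) * (c * (z : ℂ))) =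
        (a * b * c * d) * ((x * y * z : ℝ) : ℂ) := by
      intros
      push_cast
      ring
    rw [e, Complex.im_mul_ofReal, key, zero_mul]
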